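/- Let T be the bounded linear operator on ℓ² defined by (T x)_0 = x_0 − 7 x_1 and (T x)_n = x_n for n ≥ 1. Then T is a P-operator relative to the standard orthonormal basis of ℓ², but T is not positive definite: there exists a nonzero x ∈ ℓ² (e.g., x = (1, 1, 0, 0, …)) with ⟨T x, x⟩ < 0. -/

import Mathlib

local notation "⟪" x ", " y "⟫" => @inner ℝ _ _ x y

/-- `T` is a P-operator relative to the standard orthonormal basis of `ℓ²(ι)`: only `x = 0`
satisfies `⟨x, e_k⟩ ⟨T x, e_k⟩ ≤ 0` for every `k`. The coordinate `⟨x, e_k⟩` is written `x k`. -/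
def IsPOperator {ι : Type*} (T : lp (fun _ : ι => ℝ) 2 →L[ℝ] lp (fun _ : ι => ℝ) 2) : Prop :=
  ∀ x : lp (fun _ : ι => ℝ) 2, (∀ k, x k * T x k ≤ 0) → x = 0

section

variable {ι : Type*} [DecidableEq ι] {i j : ι}

theorem eq_zero_of_forall_mul_update_sub_nonpos {R : Type*} [Ring R] [LinearOrder R]
    [IsStrictOrderedRing R] (hij : i ≠ j) (c : R) {x : ι → R}
    (h : ∀ k, x k * Function.update x i (x i - c * x j) k ≤ 0) : x = 0 := by
  have eq_zero_of_ne : ∀ k ≠ i, x k = 0 := fun k hk => by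
    have hk_nonpos := h k
    rw [Function.update_of_ne hk] at hk_nonpos
    exact mul_self_eq_zero.mp (hk_nonpos.antisymm (mul_self_nonneg _))
  have eq_zero_at : x i = 0 := by
    have hi_nonpos := h i
    rw [Function.update_self, eq_zero_of_ne j hij.symm, mul_zero, sub_zero] at hi_nonpos
    exact mul_self_eq_zero.mp (hi_nonpos.antisymm (mul_self_nonneg _))
  funext k
  obtain rfl | hk := eq_or_ne k i
  · exact eq_zero_at
  · exact eq_zero_of_ne k hk

theorem inner_single_add_single_right (y : lp (fun _ : ι => ℝ) 2) (a b : ℝ) :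
    ⟪y, lp.single 2 i a + lp.single 2 j b⟫ = a * y i + b * y j := by
  simp [inner_add_right, lp.inner_single_right]

variable {T : lp (fun _ : ι => ℝ) 2 →L[ℝ] lp (fun _ : ι => ℝ) 2} {c : ℝ}

theorem isPOperator_of_eq_update_sub (hij : i ≠ j)
    (hT : ∀ x, ⇑(T x) = Function.update (⇑x) i (x i - c * x j)) : IsPOperator T := fun x hx =>
  lp.ext <| eq_zero_of_forall_mul_update_sub_nonpos hij c fun k => hT x ▸ hx k

theorem inner_apply_single_add_single_of_eq_update_sub (hij : i ≠ j)
    (hT : ∀ x, ⇑(T x) = Function.update (⇑x) i (x i - c * x j)) (a b : ℝ) :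
    ⟪T (lp.single 2 i a + lp.single 2 j b), lp.single 2 i a + lp.single 2 j b⟫ =
      a ^ 2 - c * a * b + b ^ 2 := by
  rw [inner_single_add_single_right, hT, Function.update_self, Function.update_of_ne hij.symm]
  simp only [lp.coeFn_add, Pi.add_apply, lp.single_apply_self, lp.single_apply_ne 2 _ _ hij,
    lp.single_apply_ne 2 _ _ hij.symm]
  ring

theorem exists_inner_neg_of_eq_update_sub (hij : i ≠ j) (hc : 2 < |c|)
    (hT : ∀ x, ⇑(T x) = Function.update (⇑x) i (x i - c * x j)) :
    ∃ x, x ≠ 0 ∧ ⟪T x, x⟫ < 0 := by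
  obtain ⟨s, hs_sq, hs_mul⟩ : ∃ s : ℝ, s ^ 2 = 1 ∧ c * s = |c| := by
    obtain h | h := abs_choice c
    · exact ⟨1, by norm_num, by rw [h, mul_one]⟩
    · exact ⟨-1, by norm_num, by rw [h, mul_neg_one]⟩
  have inner_neg : ⟪T (lp.single 2 i 1 + lp.single 2 j s), lp.single 2 i 1 + lp.single 2 j s⟫ < 0 :=
    calc
      _ = 1 ^ 2 - c * 1 * s + s ^ 2 := inner_apply_single_add_single_of_eq_update_sub hij hT 1 s
      _ = 2 - |c| := by rw [mul_one, hs_mul, hs_sq]; ring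
      _ < 0 := sub_neg.mpr hc
  refine ⟨_, fun h => ?_, inner_neg⟩
  rw [h, inner_zero_right] at inner_neg
  exact inner_neg.false

theorem pOperator_not_positive_definite_general (hij : i ≠ j) (hc : 2 < |c|)
    (hT : ∀ x, ⇑(T x) = Function.update (⇑x) i (x i - c * x j)) :
    IsPOperator T ∧ ∃ x, x ≠ 0 ∧ ⟪T x, x⟫ < 0 :=
  ⟨isPOperator_of_eq_update_sub hij hT, exists_inner_neg_of_eq_update_sub hij hc hT⟩

end

/-- The operator `T` on `ℓ²` given by `(Tx)_0 = x_0 - 7 x_1` and `(Tx)_n = x_n` for `n ≥ 1`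
is a P-operator relative to the standard orthonormal basis, but it is not positive
definite. -/
theorem pOperator_not_positive_definite
    (T : lp (fun _ : ℕ => ℝ) 2 →L[ℝ] lp (fun _ : ℕ => ℝ) 2)
    (hT0 : ∀ x : lp (fun _ : ℕ => ℝ) 2, T x 0 = x 0 - 7 * x 1)
    (hT : ∀ (x : lp (fun _ : ℕ => ℝ) 2) (n : ℕ), T x (n + 1) = x (n + 1)) :
    (∀ x : lp (fun _ : ℕ => ℝ) 2, (∀ n : ℕ, x n * T x n ≤ 0) → x = 0) ∧
    ∃ x : lp (fun _ : ℕ => ℝ) 2, x ≠ 0 ∧ ⟪T x, x⟫ < 0 :=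
  pOperator_not_positive_definite_general zero_ne_one (c := 7) (by norm_num) fun x =>
    Function.eq_update_iff.mpr ⟨hT0 x, fun n hn => Nat.succ_pred hn ▸ hT x n.pred⟩
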